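/- Let w ≈ 1.278 be the unique solution of (w−1)·e^w = 1. For any two independent single-item distributions D1, D2 on [0,∞), the supremum revenue over all deterministic two-item menus satisfies DRev(D1 × D2) ≤ w · (r1 + r2), where r_i is the optimal single-item revenue for D_i. In particular DRev ≤ w · SRev. -/

import Mathlib

open MeasureTheory

/-- Payment made by a utility-maximizing additive buyer with values `(v1, v2)` facing the
deterministic menu charging `a` for item 1, `b` for item 2, `c` for the pair;
ties are broken in favor of the higher payment. -/
noncomputable def pay (a b c v1 v2 : ℝ) : ℝ :=
  let u1 := v1 - a
  let u2 := v2 - b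
  let u12 := v1 + v2 - c
  let m := max (max 0 u1) (max u2 u12)
  max (if u1 = m then a else 0) (max (if u2 = m then b else 0) (if u12 = m then c else 0))

/-- Expected revenue of the menu `(a, b, c)` when values are drawn from `μ`. -/
noncomputable def rev (μ : Measure (ℝ × ℝ)) (a b c : ℝ) : ℝ :=
  ∫ v, pay a b c v.1 v.2 ∂μ

section Pointwise

theorem pay_le {a b c v1 v2 M : ℝ} (h0 : 0 ≤ M)
    (ha : 0 ≤ v1 - a → v2 - b ≤ v1 - a → v1 + v2 - c ≤ v1 - a → a ≤ M)
    (hb : 0 ≤ v2 - b → v1 - a ≤ v2 - b → v1 + v2 - c ≤ v2 - b → b ≤ M)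
    (hc : 0 ≤ v1 + v2 - c → v1 - a ≤ v1 + v2 - c → v2 - b ≤ v1 + v2 - c → c ≤ M) :
    pay a b c v1 v2 ≤ M := by
  have m0 : 0 ≤ max (max 0 (v1 - a)) (max (v2 - b) (v1 + v2 - c)) := by simp
  have m1 : v1 - a ≤ max (max 0 (v1 - a)) (max (v2 - b) (v1 + v2 - c)) := by simp
  have m2 : v2 - b ≤ max (max 0 (v1 - a)) (max (v2 - b) (v1 + v2 - c)) := by simp
  have m3 : v1 + v2 - c ≤ max (max 0 (v1 - a)) (max (v2 - b) (v1 + v2 - c)) := by simp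
  simp only [pay]
  refine max_le ?_ (max_le ?_ ?_)
  · split_ifs with h
    · rw [← h] at m0 m2 m3; exact ha m0 m2 m3
    · exact h0
  · split_ifs with h
    · rw [← h] at m0 m1 m3; exact hb m0 m1 m3
    · exact h0
  · split_ifs with h
    · rw [← h] at m0 m1 m2; exact hc m0 m1 m2
    · exact h0

theorem pay_nonneg {a : ℝ} (ha : 0 ≤ a) (b c v1 v2 : ℝ) : 0 ≤ pay a b c v1 v2 := by
  simp only [pay]
  refine le_max_of_le_left ?_
  split_ifs <;> simp [ha]

theorem pay_le_bundle {a b c : ℝ} (ha : 0 ≤ a) (hac : a ≤ c) (hbc : b ≤ c) (v1 v2 : ℝ) :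
    pay a b c v1 v2 ≤ c :=
  pay_le (ha.trans hac) (fun _ _ _ => hac) (fun _ _ _ => hbc) (fun _ _ _ => le_rfl)

theorem le_pay_free_second {p v1 : ℝ} (h : p ≤ v1) (v2 : ℝ) : p ≤ pay p 0 p v1 v2 := by
  simp only [pay]
  rcases le_total 0 v2 with hv | hv
  · refine le_max_of_le_right (le_max_of_le_right ?_)
    rw [if_pos]
    rw [max_eq_right (a := v2 - 0), max_eq_right] <;> simp <;> grind
  · refine le_max_of_le_left ?_
    rw [if_pos]
    rw [max_eq_right (a := 0), max_eq_left] <;> simp <;> grind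

theorem le_pay_free_first {p v2 : ℝ} (h : p ≤ v2) (v1 : ℝ) : p ≤ pay 0 p p v1 v2 := by
  simp only [pay]
  rcases le_total 0 v1 with hv | hv
  · refine le_max_of_le_right (le_max_of_le_right ?_)
    rw [if_pos]
    rw [max_eq_right (a := v2 - p), max_eq_right] <;> simp <;> grind
  · refine le_max_of_le_right (le_max_of_le_left ?_)
    rw [if_pos]
    rw [max_eq_left (a := v2 - p), max_eq_right] <;> simp <;> grind

end Pointwise

section Integration

theorem measurable_pay (a b c : ℝ) : Measurable fun v : ℝ × ℝ => pay a b c v.1 v.2 := by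
  simp only [pay]
  refine Measurable.max ?_ (Measurable.max ?_ ?_) <;>
    exact Measurable.ite (measurableSet_eq_fun (by fun_prop) (by fun_prop))
      measurable_const measurable_const

theorem integrable_pay {μ : Measure (ℝ × ℝ)} [IsFiniteMeasure μ] {a b c : ℝ} (ha : 0 ≤ a)
    (hac : a ≤ c) (hbc : b ≤ c) :
    Integrable (fun v : ℝ × ℝ => pay a b c v.1 v.2) μ := by
  refine Integrable.of_bound (measurable_pay a b c).aestronglyMeasurable c (ae_of_all _ fun v => ?_)
  rw [Real.norm_of_nonneg (pay_nonneg ha _ _ _ _)]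
  exact pay_le_bundle ha hac hbc _ _

theorem integrable_pay_right {μ : Measure ℝ} [IsFiniteMeasure μ] {a b c : ℝ} (ha : 0 ≤ a)
    (hac : a ≤ c) (hbc : b ≤ c) (v1 : ℝ) :
    Integrable (fun v2 => pay a b c v1 v2) μ := by
  refine Integrable.of_bound
    ((measurable_pay a b c).comp measurable_prodMk_left).aestronglyMeasurable c
    (ae_of_all _ fun v => ?_)
  rw [Real.norm_of_nonneg (pay_nonneg ha _ _ _ _)]
  exact pay_le_bundle ha hac hbc _ _

theorem integral_le_const_add_step {μ : Measure ℝ} [IsProbabilityMeasure μ] {f : ℝ → ℝ}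
    (hf : Integrable f μ) {A B p : ℝ} (hlt : ∀ v, v < p → f v ≤ A)
    (hge : ∀ v, p ≤ v → f v ≤ A + B) : ∫ v, f v ∂μ ≤ A + B * μ.real (Set.Ici p) := by
  have hi : Integrable ((Set.Ici p).indicator fun _ => B) μ :=
    (integrable_const B).indicator measurableSet_Ici
  calc ∫ v, f v ∂μ ≤ ∫ v, (A + (Set.Ici p).indicator (fun _ => B) v) ∂μ := by
        refine integral_mono hf ((integrable_const A).add hi) fun v => ?_
        by_cases hv : p ≤ v
        · simpa [hv] using hge v hv
        · simpa [hv] using hlt v (not_le.1 hv)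
    _ = A + B * μ.real (Set.Ici p) := by
        rw [integral_add (integrable_const A) hi, integral_indicator_const _ measurableSet_Ici]
        simp [mul_comm]

/-- The expectation of the primitive of `k`, stopped at the ends of `[s, a]`, is the integral of
`k` against the survival function. -/
theorem integral_stopped_primitive {μ : Measure ℝ} [IsProbabilityMeasure μ] {s a : ℝ}
    (hsa : s ≤ a) {k : ℝ → ℝ} (hk : ContinuousOn k (Set.Icc s a)) :
    Integrable (fun v => ∫ u in s..max s (min v a), k u) μ ∧
    ∫ v, (∫ u in s..max s (min v a), k u) ∂μ = ∫ u in s..a, k u * μ.real (Set.Ici u) := by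
  have hki : Integrable k (volume.restrict (Set.Ioc s a)) :=
    (hk.integrableOn_Icc).mono_set Set.Ioc_subset_Icc_self
  have hint : Integrable (fun q : ℝ × ℝ => ({q : ℝ × ℝ | q.2 ≤ q.1}.indicator
      (fun q => k q.2)) q) (μ.prod (volume.restrict (Set.Ioc s a))) :=
    (hki.comp_snd μ).indicator (measurableSet_le measurable_snd measurable_fst)
  have hinner : ∀ v, ∫ u in s..max s (min v a), k u =
      ∫ u in Set.Ioc s a, ({q : ℝ × ℝ | q.2 ≤ q.1}.indicator (fun q => k q.2)) (v, u) := by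
    intro v
    have : (fun u => ({q : ℝ × ℝ | q.2 ≤ q.1}.indicator (fun q => k q.2)) (v, u)) =
        (Set.Iic v).indicator k := by
      ext u; simp [Set.indicator]
    rw [this, setIntegral_indicator measurableSet_Iic,
      intervalIntegral.integral_of_le (le_max_left _ _)]
    congr 2
    ext u
    simp only [Set.mem_Ioc, Set.mem_inter_iff, Set.mem_Iic]
    grind
  simp only [hinner]
  refine ⟨hint.integral_prod_left, ?_⟩
  rw [integral_integral_swap hint, intervalIntegral.integral_of_le hsa]
  refine integral_congr_ae (ae_of_all _ fun u => ?_)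
  have : (fun v => ({q : ℝ × ℝ | q.2 ≤ q.1}.indicator (fun q => k q.2)) (v, u)) =
      (Set.Ici u).indicator fun _ => k u := by
    ext v; simp [Set.indicator]
  simp only [this]
  rw [integral_indicator_const _ measurableSet_Ici, smul_eq_mul, mul_comm]

end Integration

section Calculus

theorem log_le_of_mul_exp_eq_one {w u : ℝ} (hw : (w - 1) * Real.exp w = 1) (hu : 0 < u) :
    Real.log u ≤ (w - 1) * (1 + u) := by
  have he : Real.exp (-w) = w - 1 := by
    rw [Real.exp_neg]; exact (eq_inv_of_mul_eq_one_left hw).symm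
  have h := Real.log_le_sub_one_of_pos (mul_pos hu (Real.exp_pos (-w)))
  rw [Real.log_mul hu.ne' (Real.exp_pos _).ne', Real.log_exp, he] at h
  linarith

theorem integral_inv_sub_sq {c y s v : ℝ} (hsv : s ≤ v) (hv : v < c) :
    ∫ u in s..v, c * y / (c - u) ^ 2 = c * y / (c - v) - c * y / (c - s) := by
  have hne : ∀ u ∈ Set.uIcc s v, c - u ≠ 0 := by
    intro u hu
    rw [Set.uIcc_of_le hsv] at hu
    linarith [hu.2]
  refine intervalIntegral.integral_eq_sub_of_hasDerivAt (f := fun u => c * y / (c - u))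
    (fun u hu => ?_) ?_
  · have hd : HasDerivAt (fun u => c - u) (-1) u := (hasDerivAt_id u).const_sub c
    refine ((hd.inv (hne u hu)).const_mul (c * y)).congr_deriv ?_
    ring
  · refine ContinuousOn.intervalIntegrable ?_
    exact continuousOn_const.div (by fun_prop) fun u hu => pow_ne_zero _ (hne u hu)

theorem integral_inv_sub_sq_mul_inv {c x y s a : ℝ} (hs : 0 < s) (hsa : s ≤ a) (hac : a < c) :
    ∫ u in s..a, c * y / (c - u) ^ 2 * (x / u) =
      x * y / c * (Real.log (a / (c - a)) + Real.log ((c - s) / s)) +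
        x * y / (c - a) - x * y / (c - s) := by
  have hmem : ∀ u ∈ Set.uIcc s a, 0 < u ∧ 0 < c - u := by
    intro u hu
    rw [Set.uIcc_of_le hsa] at hu
    exact ⟨hs.trans_le hu.1, by linarith [hu.2]⟩
  have hc : 0 < c := by linarith
  have hderiv : ∀ u ∈ Set.uIcc s a, HasDerivAt
      (fun u => x * y / c * (Real.log u - Real.log (c - u)) + x * y * (c - u)⁻¹)
      (c * y / (c - u) ^ 2 * (x / u)) u := by
    intro u hu
    obtain ⟨h0, h1⟩ := hmem u hu
    have hd : HasDerivAt (fun u => c - u) (-1) u := (hasDerivAt_id u).const_sub c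
    have h := (((Real.hasDerivAt_log h0.ne').sub (hd.log h1.ne')).const_mul (x * y / c)).add
      ((hd.inv h1.ne').const_mul (x * y))
    refine h.congr_deriv ?_
    field_simp
    ring
  rw [intervalIntegral.integral_eq_sub_of_hasDerivAt hderiv]
  · rw [Real.log_div (by linarith) (by linarith), Real.log_div (by linarith) (by linarith)]
    ring
  · refine ContinuousOn.intervalIntegrable (ContinuousOn.mul ?_ ?_)
    · exact continuousOn_const.div (by fun_prop) fun u hu => pow_ne_zero _ (hmem u hu).2.ne'
    · exact continuousOn_const.div (by fun_prop) fun u hu => (hmem u hu).1.ne'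

end Calculus

section RevenueBound

/-- Expectation bound for the conditional revenue profile of a submodular menu under the survival
bound `μ [u, ∞) ≤ x / u`. -/
theorem integral_profile_le {μ : Measure ℝ} [IsProbabilityMeasure μ] {w x y s a c : ℝ}
    (hw : (w - 1) * Real.exp w = 1) (hw1 : 1 < w) (hx : 0 < x) (hy : 0 < y)
    (hμ : ∀ u, 0 < u → μ.real (Set.Ici u) ≤ x / u) (hxs : x ≤ s) (hsa : s ≤ a)
    (hac : a ≤ c - y) {f : ℝ → ℝ} (hf : Integrable f μ)
    (hlow : ∀ v, v < s → f v ≤ c * y / (c - s)) (hlow' : s = x ∨ ∀ v, v < s → f v ≤ y)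
    (hmid : ∀ v, s ≤ v → v < a → f v ≤ c * y / (c - v)) (hhigh : ∀ v, a ≤ v → f v ≤ a + y) :
    ∫ v, f v ∂μ ≤ w * (x + y) := by
  have hs : 0 < s := hx.trans_le hxs
  have ha : 0 < a := hs.trans_le hsa
  have ht : 0 < c - a := by linarith
  have hb : 0 < c - s := by linarith
  have hc : 0 < c := by linarith
  have hk : ContinuousOn (fun u => c * y / (c - u) ^ 2) (Set.Icc s a) :=
    continuousOn_const.div (by fun_prop) fun u hu =>
      pow_ne_zero _ (by linarith [hu.2] : 0 < c - u).ne'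
  obtain ⟨hgi, hge⟩ := integral_stopped_primitive (μ := μ) hsa hk
  set g : ℝ → ℝ := fun v => ∫ u in s..max s (min v a), c * y / (c - u) ^ 2
  have hgv : ∀ v, g v = c * y / (c - max s (min v a)) - c * y / (c - s) := fun v =>
    integral_inv_sub_sq (le_max_left _ _)
      (max_lt (by linarith) ((min_le_right _ _).trans_lt (by linarith)))
  have hgint : ∫ v, g v ∂μ ≤ x * y / c * (Real.log (a / (c - a)) + Real.log ((c - s) / s)) +
        x * y / (c - a) - x * y / (c - s) := by
    rw [hge, ← integral_inv_sub_sq_mul_inv hs hsa (by linarith)]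
    have hmeas : Antitone fun u => μ.real (Set.Ici u) := fun u v huv =>
      measureReal_mono (Set.Ici_subset_Ici.2 huv)
    refine intervalIntegral.integral_mono_on hsa ?_ ?_ fun u hu => ?_
    · refine IntervalIntegrable.continuousOn_mul (hmeas.intervalIntegrable) ?_
      rwa [Set.uIcc_of_le hsa]
    · refine ContinuousOn.intervalIntegrable ?_
      rw [Set.uIcc_of_le hsa]
      exact hk.mul (continuousOn_const.div (by fun_prop) fun u hu => (hs.trans_le hu.1).ne')
    · exact mul_le_mul_of_nonneg_left (hμ u (hs.trans_le hu.1)) (by positivity)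
  set J : ℝ := a + y - c * y / (c - a) with hJ
  have hJ' : J = a * (c - a - y) / (c - a) := by rw [hJ]; field_simp; ring
  have hJ0 : 0 ≤ J := by rw [hJ']; exact div_nonneg (mul_nonneg ha.le (by linarith)) ht.le
  have hji : Integrable ((Set.Ici a).indicator fun _ => J) μ :=
    (integrable_const J).indicator measurableSet_Ici
  have hjint : ∫ v, (Set.Ici a).indicator (fun _ => J) v ∂μ ≤ x - x * y / (c - a) := by
    rw [integral_indicator_const _ measurableSet_Ici, smul_eq_mul]
    calc μ.real (Set.Ici a) * J ≤ x / a * J := mul_le_mul_of_nonneg_right (hμ a ha) hJ0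
      _ = x - x * y / (c - a) := by rw [hJ']; field_simp
  have hbase_eq : c * y / (c - s) = y + s * y / (c - s) := by field_simp; ring
  have hrest : ∀ v, s ≤ v →
      f v - g v - (Set.Ici a).indicator (fun _ => J) v ≤ c * y / (c - s) := by
    intro v hv
    rw [hgv]
    by_cases hva : a ≤ v
    · have h := hhigh v hva
      rw [min_eq_right hva, max_eq_right hsa]
      simp only [Set.mem_Ici, hva, Set.indicator_of_mem]
      linarith
    · have h := hmid v hv (not_le.1 hva)
      rw [min_eq_left (not_le.1 hva).le, max_eq_right hv]
      simp only [Set.mem_Ici, hva, not_false_eq_true, Set.indicator_of_notMem]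
      linarith
  have hrest' : ∀ v, v < s → f v - g v - (Set.Ici a).indicator (fun _ => J) v = f v := by
    intro v hv
    rw [hgv, max_eq_left ((min_le_left _ _).trans hv.le),
      Set.indicator_of_notMem (by simp; linarith)]
    ring
  have hres : ∫ v, (f v - g v - (Set.Ici a).indicator (fun _ => J) v) ∂μ ≤
      y + x * y / (c - s) := by
    have hi := (hf.sub hgi).sub hji
    rcases hlow' with rfl | h
    · have := integral_le_const_add_step hi (A := c * y / (c - s)) (B := 0) (p := s)
        (fun v hv => (hrest' v hv).trans_le (hlow v hv)) (fun v hv => by simpa using hrest v hv)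
      rw [zero_mul, add_zero, hbase_eq] at this
      exact this
    · have := integral_le_const_add_step hi (A := y) (B := s * y / (c - s)) (p := s)
        (fun v hv => (hrest' v hv).trans_le (h v hv))
        (fun v hv => (hrest v hv).trans_eq hbase_eq)
      refine this.trans (add_le_add_right ?_ _)
      calc s * y / (c - s) * μ.real (Set.Ici s) ≤ s * y / (c - s) * (x / s) :=
            mul_le_mul_of_nonneg_left (hμ s hs) (by positivity)
        _ = x * y / (c - s) := by field_simp
  rw [integral_sub (f := fun v => f v - g v) (hf.sub hgi) hji, integral_sub hf hgi] at hres
  have hlog : x * y / c * (Real.log (a / (c - a)) + Real.log ((c - s) / s)) ≤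
      (w - 1) * (x + y) := by
    have h1 := log_le_of_mul_exp_eq_one hw (div_pos ha ht)
    have h2 := log_le_of_mul_exp_eq_one hw (div_pos hb hs)
    calc _ ≤ x * y / c * ((w - 1) * (1 + a / (c - a)) + (w - 1) * (1 + (c - s) / s)) :=
          mul_le_mul_of_nonneg_left (add_le_add h1 h2) (by positivity)
      _ = (w - 1) * (x * (y / (c - a)) + y * (x / s)) := by field_simp; ring
      _ ≤ (w - 1) * (x * 1 + y * 1) := by
          have h3 : y / (c - a) ≤ 1 := (div_le_one ht).2 (by linarith)
          have h4 : x / s ≤ 1 := (div_le_one hs).2 hxs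
          have : 0 ≤ w - 1 := by linarith
          gcongr
      _ = _ := by ring
  linarith

theorem rev_le {μ1 μ2 : Measure ℝ} [IsProbabilityMeasure μ1] [IsProbabilityMeasure μ2]
    {w x y a b c : ℝ} (hw : (w - 1) * Real.exp w = 1) (hw1 : 1 < w) (hx : 0 < x) (hy : 0 < y)
    (hμ1 : ∀ u, 0 ≤ u → u * μ1.real (Set.Ici u) ≤ x)
    (hμ2 : ∀ u, 0 ≤ u → u * μ2.real (Set.Ici u) ≤ y)
    (ha : 0 ≤ a) (hb : 0 ≤ b) (hac : a ≤ c) (hbc : b ≤ c) :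
    rev (μ1.prod μ2) a b c ≤ w * (x + y) := by
  have hint := integrable_pay (μ := μ1.prod μ2) ha hac hbc
  have hrev : rev (μ1.prod μ2) a b c = ∫ v1, ∫ v2, pay a b c v1 v2 ∂μ2 ∂μ1 :=
    integral_prod _ hint
  have hF : Integrable (fun v1 => ∫ v2, pay a b c v1 v2 ∂μ2) μ1 := hint.integral_prod_left
  rw [hrev]
  set F : ℝ → ℝ := fun v1 => ∫ v2, pay a b c v1 v2 ∂μ2
  have hxw : x + y ≤ w * (x + y) := by nlinarith
  have hc : 0 ≤ c := ha.trans hac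
  have step : ∀ {v1 A B : ℝ} (p : ℝ), (∀ v2, v2 < p → pay a b c v1 v2 ≤ A) →
      (∀ v2, p ≤ v2 → pay a b c v1 v2 ≤ A + B) → F v1 ≤ A + B * μ2.real (Set.Ici p) :=
    fun p h h' => integral_le_const_add_step (integrable_pay_right ha hac hbc _) h h'
  have hFc : ∀ v, F v ≤ c := fun v => by
    simpa using step (v1 := v) (A := c) (B := 0) 0
      (fun v2 _ => pay_le_bundle ha hac hbc _ _)
      (fun v2 _ => by simpa using pay_le_bundle ha hac hbc _ _)
  have hconst : ∀ A, (∀ v, F v ≤ A) → ∫ v, F v ∂μ1 ≤ A := fun A h => by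
    simpa using integral_le_const_add_step (p := 0) (B := 0) hF (fun v _ => h v)
      (fun v _ => by simpa using h v)
  rcases le_or_gt (a + b) c with hsup | hsub
  · have hlow : ∀ v, v < a → F v ≤ y := fun v hv => by
      have := step (v1 := v) (A := 0) (B := b) b
        (fun v2 h => pay_le (by linarith) (by intros; linarith) (by intros; linarith)
          (by intros; linarith))
        (fun v2 h => pay_le (by linarith) (by intros; linarith) (by intros; linarith)
          (by intros; linarith))
      linarith [hμ2 b hb]
    have hhigh : ∀ v, a ≤ v → F v ≤ y + a := fun v hv => by
      rcases lt_or_ge v (c - b) with h | h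
      · have := step (v1 := v) (A := a) (B := b) b
          (fun v2 h => pay_le (by linarith) (by intros; linarith) (by intros; linarith)
            (by intros; linarith))
          (fun v2 h => pay_le (by linarith) (by intros; linarith) (by intros; linarith)
            (by intros; linarith))
        linarith [hμ2 b hb]
      · have := step (v1 := v) (A := a) (B := c - a) (c - a)
          (fun v2 h => pay_le (by linarith) (by intros; linarith) (by intros; linarith)
            (by intros; linarith))
          (fun v2 h => pay_le (by linarith) (by intros; linarith) (by intros; linarith)
            (by intros; linarith))
        linarith [hμ2 (c - a) (by linarith)]
    linarith [integral_le_const_add_step hF hlow hhigh, hμ1 a ha]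
  have hlow : ∀ v, v < c - b → F v ≤ b * μ2.real (Set.Ici b) := fun v hv => by
    have := step (v1 := v) (A := 0) (B := b) b
      (fun v2 h => pay_le (by linarith) (by intros; linarith) (by intros; linarith)
        (by intros; linarith))
      (fun v2 h => pay_le (by linarith) (by intros; linarith) (by intros; linarith)
        (by intros; linarith))
    linarith
  have hlowy : ∀ v, v < c - b → F v ≤ y := fun v hv => (hlow v hv).trans (hμ2 b hb)
  have hmid : ∀ v, c - b ≤ v → v < a → F v ≤ c * y / (c - v) := fun v hv hva => by
    have := step (v1 := v) (A := 0) (B := c) (c - v)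
      (fun v2 h => pay_le (by linarith) (by intros; linarith) (by intros; linarith)
        (by intros; linarith))
      (fun v2 h => pay_le (by linarith) (by intros; linarith) (by intros; linarith)
        (by intros; linarith))
    have h0 : 0 < c - v := by linarith
    have h1 := hμ2 (c - v) h0.le
    rw [le_div_iff₀ h0]
    nlinarith
  have hhigh : ∀ v, a ≤ v → F v ≤ a + y := fun v hv => by
    have := step (v1 := v) (A := a) (B := c - a) (c - a)
      (fun v2 h => pay_le (by linarith) (by intros; linarith) (by intros; linarith)
        (by intros; linarith))
      (fun v2 h => pay_le (by linarith) (by intros; linarith) (by intros; linarith)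
        (by intros; linarith))
    linarith [hμ2 (c - a) (by linarith)]
  rcases le_or_gt c (x + y) with hcxy | hcxy
  · exact (hconst c hFc).trans (hcxy.trans hxw)
  rcases le_or_gt b y with hby | hby
  · have := integral_le_const_add_step hF (p := c - b) (A := y) (B := c - b) hlowy
      (fun v _ => by linarith [hFc v])
    linarith [hμ1 (c - b) (by linarith)]
  rcases le_or_gt a x with hax | hax
  · refine (hconst (a + y) fun v => ?_).trans (by linarith)
    rcases lt_or_ge v (c - b) with h | h
    · linarith [hlowy v h]
    rcases lt_or_ge v a with h' | h'
    · rcases le_or_gt (c - a) y with hty | hty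
      · linarith [hFc v]
      · refine (hmid v h h').trans ?_
        rw [div_le_iff₀ (by linarith)]
        nlinarith
    · exact hhigh v h'
  refine integral_profile_le (c := c) (s := max (c - b) x) (a := min a (c - y)) hw hw1 hx hy
    (fun u hu => by rw [le_div_iff₀ hu, mul_comm]; exact hμ1 u hu.le) (le_max_right _ _)
    ?_ (min_le_right _ _) hF ?_ ?_ ?_ ?_
  · refine max_le (le_min ?_ ?_) (le_min ?_ ?_) <;> linarith
  · intro v hv
    have hs : max (c - b) x < c := max_lt (by linarith) (by linarith)
    rcases lt_or_ge v (c - b) with h | h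
    · refine (hlowy v h).trans ?_
      rw [le_div_iff₀ (by linarith)]
      nlinarith [le_max_right (c - b) x]
    · have hva : v < a := hv.trans (max_lt (by linarith) hax)
      refine (hmid v h hva).trans ?_
      exact div_le_div_of_nonneg_left (by positivity) (by linarith) (by linarith)
  · rcases le_total (c - b) x with h | h
    · exact Or.inl (max_eq_right h)
    · rw [max_eq_left h]; exact Or.inr hlowy
  · exact fun v hv hva => hmid v ((le_max_left _ _).trans hv) (hva.trans_le (min_le_left _ _))
  · intro v hv
    rcases le_total a (c - y) with h | h
    · rw [min_eq_left h] at hv ⊢; exact hhigh v hv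
    · rw [min_eq_right h]; linarith [hFc v]

theorem mul_survival_fst_le_rev (μ1 μ2 : Measure ℝ) [IsProbabilityMeasure μ1]
    [IsProbabilityMeasure μ2] {p : ℝ} (hp : 0 ≤ p) :
    p * μ1.real (Set.Ici p) ≤ rev (μ1.prod μ2) p 0 p := by
  have hS : MeasurableSet (Set.Ici p ×ˢ (Set.univ : Set ℝ)) := measurableSet_Ici.prod .univ
  calc p * μ1.real (Set.Ici p)
      = ∫ v, (Set.Ici p ×ˢ (Set.univ : Set ℝ)).indicator (fun _ => p) v ∂μ1.prod μ2 := by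
        rw [integral_indicator_const _ hS, measureReal_prod_prod]; simp [mul_comm]
    _ ≤ _ := by
        refine integral_mono ((integrable_const p).indicator hS)
          (integrable_pay hp le_rfl hp) fun v => ?_
        refine Set.indicator_le' (fun v hv => le_pay_free_second hv.1 _)
          (fun v _ => pay_nonneg hp _ _ _ _) v

theorem mul_survival_snd_le_rev (μ1 μ2 : Measure ℝ) [IsProbabilityMeasure μ1]
    [IsProbabilityMeasure μ2] {p : ℝ} (hp : 0 ≤ p) :
    p * μ2.real (Set.Ici p) ≤ rev (μ1.prod μ2) 0 p p := by
  have hS : MeasurableSet ((Set.univ : Set ℝ) ×ˢ Set.Ici p) := .prod .univ measurableSet_Ici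
  calc p * μ2.real (Set.Ici p)
      = ∫ v, ((Set.univ : Set ℝ) ×ˢ Set.Ici p).indicator (fun _ => p) v ∂μ1.prod μ2 := by
        rw [integral_indicator_const _ hS, measureReal_prod_prod]; simp [mul_comm]
    _ ≤ _ := by
        refine integral_mono ((integrable_const p).indicator hS)
          (integrable_pay le_rfl hp le_rfl) fun v => ?_
        refine Set.indicator_le' (fun v hv => le_pay_free_first hv.2 _)
          (fun v _ => pay_nonneg le_rfl _ _ _ _) v

end RevenueBound

theorem stmt7 (μ1 μ2 : Measure ℝ) [IsProbabilityMeasure μ1] [IsProbabilityMeasure μ2]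
    (h1 : μ1 (Set.Iio 0) = 0) (h2 : μ2 (Set.Iio 0) = 0)
    (r1 r2 w : ℝ) (hw : (w - 1) * Real.exp w = 1) (hw1 : 1 < w)
    (hr1 : sSup {x : ℝ | ∃ p : ℝ, 0 ≤ p ∧ x = p * (μ1 (Set.Ici p)).toReal} = r1)
    (hr2 : sSup {x : ℝ | ∃ p : ℝ, 0 ≤ p ∧ x = p * (μ2 (Set.Ici p)).toReal} = r2) :
    sSup {r : ℝ | ∃ a b c : ℝ, 0 ≤ a ∧ 0 ≤ b ∧ max a b ≤ c ∧ r = rev (μ1.prod μ2) a b c}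
      ≤ w * (r1 + r2) := by
  have hr1' : 0 ≤ r1 := hr1 ▸ Real.sSup_nonneg (by rintro _ ⟨p, hp, rfl⟩; positivity)
  have hr2' : 0 ≤ r2 := hr2 ▸ Real.sSup_nonneg (by rintro _ ⟨p, hp, rfl⟩; positivity)
  have hnn : 0 ≤ w * (r1 + r2) := by positivity
  by_cases hB : BddAbove {r : ℝ | ∃ a b c : ℝ, 0 ≤ a ∧ 0 ≤ b ∧ max a b ≤ c ∧
      r = rev (μ1.prod μ2) a b c}
  swap
  · rwa [Real.sSup_of_not_bddAbove hB]
  obtain ⟨M, hM⟩ := hB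
  have hB1 : BddAbove {x : ℝ | ∃ p : ℝ, 0 ≤ p ∧ x = p * (μ1 (Set.Ici p)).toReal} := by
    refine ⟨M, ?_⟩
    rintro _ ⟨p, hp, rfl⟩
    exact (mul_survival_fst_le_rev μ1 μ2 hp).trans
      (hM ⟨p, 0, p, hp, le_rfl, by simp [hp], rfl⟩)
  have hB2 : BddAbove {x : ℝ | ∃ p : ℝ, 0 ≤ p ∧ x = p * (μ2 (Set.Ici p)).toReal} := by
    refine ⟨M, ?_⟩
    rintro _ ⟨p, hp, rfl⟩
    exact (mul_survival_snd_le_rev μ1 μ2 hp).trans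
      (hM ⟨0, p, p, le_rfl, hp, by simp [hp], rfl⟩)
  refine Real.sSup_le ?_ hnn
  rintro _ ⟨a, b, c, ha, hb, hc, rfl⟩
  refine le_of_forall_pos_le_add fun ε hε => ?_
  have hw0 : 0 < w := by linarith
  have hδ : 0 < ε / (2 * w) := by positivity
  have h := rev_le (μ1 := μ1) (μ2 := μ2) (x := r1 + ε / (2 * w)) (y := r2 + ε / (2 * w)) hw hw1
    (by linarith) (by linarith)
    (fun u hu => (le_csSup hB1 ⟨u, hu, rfl⟩).trans (by linarith))
    (fun u hu => (le_csSup hB2 ⟨u, hu, rfl⟩).trans (by linarith))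
    ha hb ((le_max_left _ _).trans hc) ((le_max_right _ _).trans hc)
  refine h.trans_eq ?_
  field_simp
  ring
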